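/- For every (φ,φ̄) ∈ G(T,R) and every k ∈ ℤ, the subspace φ·W := φ(W^♯) ∩ V is E-commensurable of index k with W if and only if d(φ) = k. -/

import Mathlib

open Module Submodule

noncomputable section

abbrev TT : Type := (ℕ → ℂ) × (ℕ →₀ ℂ)
abbrev RR : Type := (ℕ →₀ ℂ) × (ℕ → ℂ)

lemma lc_v_add (v w : ℕ → ℂ) (l : ℕ →₀ ℂ) :
    Finsupp.linearCombination ℂ (v + w) l
      = Finsupp.linearCombination ℂ v l + Finsupp.linearCombination ℂ w l := by
  classical
  simp only [Finsupp.linearCombination_apply]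
  rw [← Finsupp.sum_add]
  exact Finsupp.sum_congr fun i _ => by simp [Pi.add_apply, smul_add, mul_add]

lemma lc_v_smul (c : ℂ) (v : ℕ → ℂ) (l : ℕ →₀ ℂ) :
    Finsupp.linearCombination ℂ (c • v) l = c • Finsupp.linearCombination ℂ v l := by
  classical
  simp only [Finsupp.linearCombination_apply, Finsupp.smul_sum]
  exact Finsupp.sum_congr fun i _ => by simp [Pi.smul_apply, smul_comm, smul_eq_mul, mul_left_comm]

/-- The nondegenerate pairing `p : T × R → ℂ`,
`p((ω,u),(w,ν)) = Σ_i ω(i)w(i) + Σ_i u(i)ν(i)`. -/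
def pairB : TT →ₗ[ℂ] RR →ₗ[ℂ] ℂ :=
  LinearMap.mk₂ ℂ
    (fun x y => Finsupp.linearCombination ℂ x.1 y.1 + Finsupp.linearCombination ℂ y.2 x.2)
    (fun x x' y => by
      simp only [Prod.fst_add, Prod.snd_add, lc_v_add, map_add]; ring)
    (fun c x y => by
      simp only [Prod.smul_fst, Prod.smul_snd, lc_v_smul, map_smul, smul_add])
    (fun x y y' => by
      simp only [Prod.fst_add, Prod.snd_add, lc_v_add, map_add]; ring)
    (fun c x y => by
      simp only [Prod.smul_fst, Prod.smul_snd, lc_v_smul, map_smul, smul_add])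

/-- The Mackey-group condition on a pair of automorphisms:
`p(φ x, y) = p(x, φ̄ y)` for all `x ∈ T`, `y ∈ R`. -/
def IsMackey (φ : TT ≃ₗ[ℂ] TT) (ψ : RR ≃ₗ[ℂ] RR) : Prop :=
  ∀ (x : TT) (y : RR), pairB (φ x) y = pairB x (ψ y)

/-- `W^♯ = (ℕ→ℂ) × {0} ⊆ T`. -/
def Wsharp : Submodule ℂ TT := LinearMap.range (LinearMap.inl ℂ (ℕ → ℂ) (ℕ →₀ ℂ))

/-- `U^♯ = {0} × (ℕ→ℂ) ⊆ R`. -/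
def Usharp : Submodule ℂ RR := LinearMap.range (LinearMap.inr ℂ (ℕ →₀ ℂ) (ℕ → ℂ))

/-- `V = (ℕ→₀ℂ) × (ℕ→₀ℂ) ⊆ T`. -/
def Vsub : Submodule ℂ TT :=
  LinearMap.range
    ((Finsupp.lcoeFun : (ℕ →₀ ℂ) →ₗ[ℂ] (ℕ → ℂ)).prodMap
      (LinearMap.id : (ℕ →₀ ℂ) →ₗ[ℂ] (ℕ →₀ ℂ)))

/-- `W = (ℕ→₀ℂ) × {0} ⊆ T`. -/
def Wsub : Submodule ℂ TT :=
  LinearMap.range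
    ((LinearMap.inl ℂ (ℕ → ℂ) (ℕ →₀ ℂ)).comp
      (Finsupp.lcoeFun : (ℕ →₀ ℂ) →ₗ[ℂ] (ℕ → ℂ)))

/-- `π_U : T → (ℕ→₀ℂ)`, the second projection. -/
def piU : TT →ₗ[ℂ] (ℕ →₀ ℂ) := LinearMap.snd ℂ (ℕ → ℂ) (ℕ →₀ ℂ)

/-- `π_{W*} : R → (ℕ→₀ℂ)`, the first projection. -/
def piW : RR →ₗ[ℂ] (ℕ →₀ ℂ) := LinearMap.fst ℂ (ℕ →₀ ℂ) (ℕ → ℂ)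

/-- The degree `d(φ) = dim π_U(φ(W^♯)) − dim π_U(φ^{-1}(W^♯))`. -/
def deg (φ : TT ≃ₗ[ℂ] TT) : ℤ :=
  (Module.finrank ℂ ((Wsharp.map φ.toLinearMap).map piU) : ℤ) -
    (Module.finrank ℂ ((Wsharp.map φ.symm.toLinearMap).map piU) : ℤ)

/-- `span {(δ_i, 0) : i ≥ n} ⊆ T`. -/
def tailSpan (n : ℕ) : Submodule ℂ TT :=
  Submodule.span ℂ
    ((fun i => ((((Finsupp.single i (1 : ℂ)) : ℕ →₀ ℂ) : ℕ → ℂ), (0 : ℕ →₀ ℂ))) '' {i | n ≤ i})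

/-- `W'` is E-commensurable of index `k` with `W`:
`W' = G ⊕ span{(δ_i,0) : i ≥ n}` with `G ⊆ V` finite-dimensional of dimension `n + k`. -/
def Ecomm (W' : Submodule ℂ TT) (k : ℤ) : Prop :=
  ∃ (n : ℕ) (G : Submodule ℂ TT), G ≤ Vsub ∧ FiniteDimensional ℂ G ∧
    (Module.finrank ℂ G : ℤ) = (n : ℤ) + k ∧ Disjoint G (tailSpan n) ∧
    W' = G ⊔ tailSpan n

/-- `W'^⊥ = {y ∈ R : p(x,y) = 0 for all x ∈ W'}`. -/
def perpR (W' : Submodule ℂ TT) : Submodule ℂ RR :=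
  ⨅ x ∈ (W' : Set TT), LinearMap.ker (pairB x)

/-- `Y^⊥ = {x ∈ T : p(x,y) = 0 for all y ∈ Y}`. -/
def perpT (Y : Submodule ℂ RR) : Submodule ℂ TT :=
  ⨅ y ∈ (Y : Set RR), LinearMap.ker (pairB.flip y)

/-- The action `φ·W' = φ((W'^⊥)^⊥) ∩ V`. -/
def actOn (φ : TT ≃ₗ[ℂ] TT) (W' : Submodule ℂ TT) : Submodule ℂ TT :=
  ((perpT (perpR W')).map φ.toLinearMap) ⊓ Vsub

end


/-- Rank-nullity for the restriction of a linear map to a subspace. -/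
theorem finrank_map_add_finrank_inf_ker {M N : Type*} [AddCommGroup M] [Module ℂ M]
    [AddCommGroup N] [Module ℂ N] (f : M →ₗ[ℂ] N) (p : Submodule ℂ M) [FiniteDimensional ℂ p] :
    finrank ℂ (p.map f) + finrank ℂ (p ⊓ LinearMap.ker f : Submodule ℂ M) = finrank ℂ p := by
  have h := LinearMap.finrank_range_add_finrank_ker (f.domRestrict p)
  rw [LinearMap.range_domRestrict, LinearMap.ker_domRestrict] at h
  have hker := p.finrank_map_subtype_eq (Submodule.comap p.subtype (LinearMap.ker f))
  rw [Submodule.map_comap_subtype] at hker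
  rwa [hker]

theorem finrank_sup_of_disjoint {M : Type*} [AddCommGroup M] [Module ℂ M]
    {p q : Submodule ℂ M} [FiniteDimensional ℂ p] [FiniteDimensional ℂ q] (h : Disjoint p q) :
    finrank ℂ (p ⊔ q : Submodule ℂ M) = finrank ℂ p + finrank ℂ q := by
  have := Submodule.finrank_sup_add_finrank_inf_eq p q
  rwa [h.eq_bot, finrank_bot, add_zero] at this

/-- Complements of the same subspace in the same space have equal dimension. -/
theorem finrank_eq_of_disjoint_of_sup_eq {M : Type*} [AddCommGroup M] [Module ℂ M]
    {p q r : Submodule ℂ M} (hp : Disjoint p r) (hq : Disjoint q r) (h : p ⊔ r = q ⊔ r) :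
    finrank ℂ p = finrank ℂ q := by
  have key (s : Submodule ℂ M) (hs : Disjoint s r) :
      finrank ℂ ((s ⊔ r).map r.mkQ) = finrank ℂ s := by
    rw [Submodule.map_sup, Submodule.mkQ_map_self, sup_bot_eq,
      ← LinearMap.range_domRestrict]
    refine LinearMap.finrank_range_of_inj (LinearMap.injective_domRestrict_iff.2 ?_)
    rwa [Submodule.ker_mkQ]
  rw [← key p hp, ← key q hq, h]

theorem mem_Wsharp {x : TT} : x ∈ Wsharp ↔ x.2 = 0 := by
  simp only [Wsharp, LinearMap.mem_range, LinearMap.inl_apply]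
  exact ⟨fun ⟨y, hy⟩ => hy ▸ rfl, fun hx => ⟨x.1, Prod.ext rfl hx.symm⟩⟩

theorem mem_Vsub {x : TT} : x ∈ Vsub ↔ ∃ f : ℕ →₀ ℂ, ⇑f = x.1 := by
  simp only [Vsub, LinearMap.mem_range]
  exact ⟨fun ⟨y, hy⟩ => ⟨y.1, congrArg Prod.fst hy⟩, fun ⟨f, hf⟩ => ⟨(f, x.2), Prod.ext hf rfl⟩⟩

theorem mem_tailSpan {n : ℕ} {x : TT} :
    x ∈ tailSpan n ↔ x ∈ Vsub ∧ x.2 = 0 ∧ ∀ i < n, x.1 i = 0 := by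
  constructor
  · intro hx
    induction hx using Submodule.span_induction with
    | mem x hx =>
      obtain ⟨i, hi, rfl⟩ := hx
      refine ⟨mem_Vsub.2 ⟨_, rfl⟩, rfl, fun j hj => ?_⟩
      exact Finsupp.single_eq_of_ne (by simp at hi; omega)
    | zero => exact ⟨zero_mem _, rfl, fun _ _ => rfl⟩
    | add x y _ _ hx hy =>
      exact ⟨add_mem hx.1 hy.1, by simp [hx.2.1, hy.2.1],
        fun i hi => by simp [hx.2.2 i hi, hy.2.2 i hi]⟩
    | smul c x _ hx =>
      exact ⟨Submodule.smul_mem _ c hx.1, by simp [hx.2.1], fun i hi => by simp [hx.2.2 i hi]⟩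
  · rintro ⟨hV, h2, h1⟩
    obtain ⟨f, hf⟩ := mem_Vsub.1 hV
    have hx : x = f.sum fun i c => c •
        ((((Finsupp.single i (1 : ℂ)) : ℕ →₀ ℂ) : ℕ → ℂ), (0 : ℕ →₀ ℂ)) := by
      refine Prod.ext ?_ ?_
      · rw [← hf]
        ext j
        simp [Finsupp.sum, Prod.fst_sum, Finset.sum_apply, Finsupp.single_apply]
      · simp [Finsupp.sum, Prod.snd_sum, h2]
    rw [hx]
    refine Submodule.sum_mem _ fun i hi => Submodule.smul_mem _ _ (Submodule.subset_span ⟨i, ?_, rfl⟩)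
    by_contra hn
    exact Finsupp.mem_support_iff.1 hi (by rw [hf]; exact h1 i (by simpa using hn))

theorem tailSpan_eq_sup (n : ℕ) :
    tailSpan n = Submodule.span ℂ
      {((((Finsupp.single n (1 : ℂ)) : ℕ →₀ ℂ) : ℕ → ℂ), (0 : ℕ →₀ ℂ))} ⊔ tailSpan (n + 1) := by
  have hset : {i | n ≤ i} = insert n {i | n + 1 ≤ i} := by
    ext i
    simp only [Set.mem_ofPred_eq, Set.mem_insert_iff]
    omega
  rw [tailSpan, tailSpan, ← Submodule.span_union, Set.singleton_union, hset, Set.image_insert_eq]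

theorem disjoint_span_single_tailSpan (n : ℕ) :
    Disjoint (Submodule.span ℂ
      {((((Finsupp.single n (1 : ℂ)) : ℕ →₀ ℂ) : ℕ → ℂ), (0 : ℕ →₀ ℂ))}) (tailSpan (n + 1)) := by
  rw [Submodule.disjoint_def]
  intro x hx hx'
  obtain ⟨c, rfl⟩ := Submodule.mem_span_singleton.1 hx
  have := (mem_tailSpan.1 hx').2.2 n (by omega)
  simp at this
  simp [this]

/-- In a presentation of an E-commensurable subspace the cut-off can be raised. -/
theorem exists_sup_tailSpan_of_le {W' : Submodule ℂ TT} {k : ℤ} {n : ℕ}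
    (h : ∃ G : Submodule ℂ TT, FiniteDimensional ℂ G ∧ (finrank ℂ G : ℤ) = n + k ∧
      Disjoint G (tailSpan n) ∧ W' = G ⊔ tailSpan n) {m : ℕ} (hm : n ≤ m) :
    ∃ G : Submodule ℂ TT, FiniteDimensional ℂ G ∧ (finrank ℂ G : ℤ) = m + k ∧
      Disjoint G (tailSpan m) ∧ W' = G ⊔ tailSpan m := by
  induction m, hm using Nat.le_induction with
  | base => exact h
  | succ m _ ih =>
    obtain ⟨G, hfin, hrank, hdisj, rfl⟩ := ih
    have hd := disjoint_span_single_tailSpan m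
    rw [tailSpan_eq_sup m] at hdisj ⊢
    refine ⟨_, inferInstance, ?_, hd.disjoint_sup_left_of_disjoint_sup_right hdisj,
      (sup_assoc _ _ _).symm⟩
    rw [finrank_sup_of_disjoint (hdisj.mono_right le_sup_left), finrank_span_singleton]
    · push_cast
      rw [hrank]
      ring
    · intro h0
      have := congrFun (congrArg Prod.fst h0) m
      simp at this

theorem Ecomm.index_unique {W' : Submodule ℂ TT} {k l : ℤ} (hk : Ecomm W' k) (hl : Ecomm W' l) :
    k = l := by
  obtain ⟨n, G, -, hG⟩ := hk
  obtain ⟨m, H, -, hH⟩ := hl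
  obtain ⟨G, -, hG, hGd, hGs⟩ := exists_sup_tailSpan_of_le ⟨G, hG⟩ (le_max_left n m)
  obtain ⟨H, -, hH, hHd, hHs⟩ := exists_sup_tailSpan_of_le ⟨H, hH⟩ (le_max_right n m)
  have := finrank_eq_of_disjoint_of_sup_eq hGd hHd (hGs.symm.trans hHs)
  omega

/-- A linear map `(ℕ → ℂ) → (ℕ →₀ ℂ)` whose coordinates are finitely supported functionals
depends on only finitely many coordinates. -/
theorem exists_forall_eq_zero_of_coord (c : (ℕ → ℂ) →ₗ[ℂ] (ℕ →₀ ℂ)) (l : ℕ → ℕ →₀ ℂ)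
    (hc : ∀ ω j, c ω j = Finsupp.linearCombination ℂ ω (l j)) :
    ∃ n : ℕ, ∀ ω : ℕ → ℂ, (∀ i < n, ω i = 0) → c ω = 0 := by
  let S (N : ℕ) : Submodule ℂ (ℕ → ℂ) :=
    ⨅ j ≥ N, LinearMap.ker ((Finsupp.lapply j).comp c : (ℕ → ℂ) →ₗ[ℂ] ℂ)
  have hS (N : ℕ) (ω : ℕ → ℂ) : ω ∈ S N ↔ ∀ j ≥ N, c ω j = 0 := by
    simp [S, Submodule.mem_iInf]
  have hclosed (N : ℕ) : IsClosed (S N : Set (ℕ → ℂ)) := by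
    have : (S N : Set (ℕ → ℂ)) = ⋂ j ≥ N, {ω | c ω j = 0} := by
      ext ω
      simp [hS]
    rw [this]
    refine isClosed_biInter fun j _ => isClosed_eq ?_ continuous_const
    simp only [hc, Finsupp.linearCombination_apply, Finsupp.sum]
    fun_prop
  have hcover : ⋃ N, (S N : Set (ℕ → ℂ)) = Set.univ := by
    refine Set.eq_univ_of_forall fun ω => Set.mem_iUnion.2 ?_
    obtain ⟨N, hN⟩ := (c ω).support.bddAbove
    refine ⟨N + 1, (hS _ _).2 fun j hj => ?_⟩
    by_contra hne
    have := hN (Finsupp.mem_support_iff.2 hne)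
    omega
  obtain ⟨N, hN⟩ := nonempty_interior_of_iUnion_of_closed hclosed hcover
  have htop := (S N).eq_top_of_nonempty_interior' hN
  obtain ⟨n, hn⟩ := ((Finset.range N).biUnion fun j => (l j).support).bddAbove
  refine ⟨n + 1, fun ω hω => ?_⟩
  ext j
  by_cases hj : N ≤ j
  · exact (hS N ω).1 (htop ▸ Submodule.mem_top) j hj
  · rw [hc, Finsupp.linearCombination_apply]
    refine Finset.sum_eq_zero fun i hi => ?_
    have := hn (Finset.mem_biUnion.2 ⟨j, Finset.mem_range.2 (not_le.1 hj), hi⟩)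
    simp [hω i (by omega)]

theorem IsMackey.exists_forall_snd_eq_zero {φ : TT ≃ₗ[ℂ] TT} {ψ : RR ≃ₗ[ℂ] RR}
    (h : IsMackey φ ψ) :
    ∃ n : ℕ, ∀ x ∈ Wsharp, (∀ i < n, x.1 i = 0) → (φ x).2 = 0 := by
  obtain ⟨n, hn⟩ := exists_forall_eq_zero_of_coord
    (piU ∘ₗ φ.toLinearMap ∘ₗ LinearMap.inl ℂ (ℕ → ℂ) (ℕ →₀ ℂ))
    (fun j => (ψ (0, Pi.single j 1)).1) fun ω j => by
      have := h (ω, 0) (0, Pi.single j 1)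
      simp only [pairB, LinearMap.mk₂_apply, map_zero, zero_add, add_zero] at this
      rw [← this, Finsupp.linearCombination_apply, Finsupp.sum]
      simp [piU, Pi.single_apply]
  refine ⟨n, fun x hx hx' => ?_⟩
  have hx0 : x = (x.1, 0) := Prod.ext rfl (mem_Wsharp.1 hx)
  rw [hx0]
  exact hn x.1 hx'

theorem IsMackey.symm {φ : TT ≃ₗ[ℂ] TT} {ψ : RR ≃ₗ[ℂ] RR} (h : IsMackey φ ψ) :
    IsMackey φ.symm ψ.symm := fun x y => by
  simpa using (h (φ.symm x) (ψ.symm y)).symm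

/-- The subspace `ℂⁿ × (ℕ →₀ ℂ)` of `T`. -/
def headSub (n : ℕ) : Submodule ℂ TT where
  carrier := {x | ∀ i, n ≤ i → x.1 i = 0}
  add_mem' hx hy i hi := by simp [hx i hi, hy i hi]
  zero_mem' _ _ := rfl
  smul_mem' c x hx i hi := by simp [hx i hi]

theorem mem_headSub {n : ℕ} {x : TT} : x ∈ headSub n ↔ ∀ i, n ≤ i → x.1 i = 0 := Iff.rfl

theorem headSub_le_Vsub (n : ℕ) : headSub n ≤ Vsub := fun x hx =>
  mem_Vsub.2 ⟨Finsupp.onFinset (Finset.range n) x.1 fun i hi => by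
    by_contra hn
    exact hi (hx i (by simpa using hn)), rfl⟩

theorem disjoint_headSub_tailSpan (n : ℕ) : Disjoint (headSub n) (tailSpan n) := by
  rw [Submodule.disjoint_def]
  intro x hx hx'
  obtain ⟨-, h2, h1⟩ := mem_tailSpan.1 hx'
  refine Prod.ext (funext fun i => ?_) h2
  exact (lt_or_ge i n).elim (h1 i) (hx i)

/-- `Wsharp ⊓ headSub n` is the coordinate space `ℂⁿ`. -/
def headEquiv (n : ℕ) : (Wsharp ⊓ headSub n : Submodule ℂ TT) ≃ₗ[ℂ] (Fin n → ℂ) where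
  toFun x i := x.1.1 i
  map_add' _ _ := rfl
  map_smul' _ _ := rfl
  invFun y := ⟨(fun i => if h : i < n then y ⟨i, h⟩ else 0, 0),
    mem_Wsharp.2 rfl, fun i hi => by simp [not_lt.2 hi]⟩
  left_inv x := by
    refine Subtype.ext (Prod.ext (funext fun i => ?_) (mem_Wsharp.1 x.2.1).symm)
    by_cases hi : i < n
    · simp [hi]
    · simpa [hi] using (x.2.2 i (not_lt.1 hi)).symm
  right_inv y := by
    ext i
    simp

/-- Removing the coordinates `≥ n` from the first component. -/
theorem exists_headSub_sub_mem_Wsharp (n : ℕ) (x : TT) :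
    ∃ y ∈ headSub n, x - y ∈ Wsharp ∧ ∀ i < n, (x - y).1 i = 0 := by
  refine ⟨(fun i => if i < n then x.1 i else 0, x.2), fun i hi => by simp [not_lt.2 hi],
    mem_Wsharp.2 (by simp), fun i hi => by simp [hi]⟩

/-- A linear map on `Wsharp` that kills the tail has the image of its head as image. -/
theorem map_Wsharp_eq_map_head {φ : TT ≃ₗ[ℂ] TT} {n : ℕ}
    (hn : ∀ x ∈ Wsharp, (∀ i < n, x.1 i = 0) → (φ x).2 = 0) :
    (Wsharp.map φ.toLinearMap).map piU
      = (Wsharp ⊓ headSub n).map (piU ∘ₗ φ.toLinearMap) := by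
  rw [← Submodule.map_comp]
  refine le_antisymm ?_ (Submodule.map_mono inf_le_left)
  rintro _ ⟨x, hx, rfl⟩
  obtain ⟨y, hy, hxy, hz⟩ := exists_headSub_sub_mem_Wsharp n x
  refine ⟨y, ⟨?_, hy⟩, ?_⟩
  · simpa using sub_mem hx hxy
  · have := hn _ hxy hz
    rw [map_sub, Prod.snd_sub, sub_eq_zero] at this
    exact this.symm

theorem ecomm_deg {φ : TT ≃ₗ[ℂ] TT} {ψ : RR ≃ₗ[ℂ] RR} (h : IsMackey φ ψ) :
    Ecomm ((Wsharp.map φ.toLinearMap) ⊓ Vsub) (deg φ) := by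
  obtain ⟨n, hn⟩ := h.symm.exists_forall_snd_eq_zero
  obtain ⟨m, hm⟩ := h.exists_forall_snd_eq_zero
  set L := Wsharp.map φ.toLinearMap with hL
  have memL (x : TT) : x ∈ L ↔ (φ.symm x).2 = 0 := by
    rw [hL, ← mem_Wsharp, Submodule.mem_map_equiv]
  have hfinHead (i : ℕ) : FiniteDimensional ℂ (Wsharp ⊓ headSub i : Submodule ℂ TT) :=
    (headEquiv i).symm.finiteDimensional
  have hfinU : FiniteDimensional ℂ (L.map piU) := by
    rw [hL, map_Wsharp_eq_map_head hm]
    infer_instance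
  have hGU : (L ⊓ headSub n).map piU = L.map piU := by
    refine le_antisymm (Submodule.map_mono inf_le_left) ?_
    rintro _ ⟨x, hx, rfl⟩
    obtain ⟨y, hy, hxy, hz⟩ := exists_headSub_sub_mem_Wsharp n x
    refine ⟨y, ⟨?_, hy⟩, ?_⟩
    · simpa using sub_mem hx ((memL _).2 (hn _ hxy hz))
    · exact (sub_eq_zero.1 (mem_Wsharp.1 hxy)).symm
  have hGK : L ⊓ headSub n ⊓ LinearMap.ker piU
      = Wsharp ⊓ headSub n ⊓ LinearMap.ker (piU ∘ₗ φ.symm.toLinearMap) := by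
    ext x
    have h1 : x ∈ LinearMap.ker piU ↔ x.2 = 0 := Iff.rfl
    have h2 : x ∈ LinearMap.ker (piU ∘ₗ φ.symm.toLinearMap) ↔ (φ.symm x).2 = 0 := Iff.rfl
    simp only [Submodule.mem_inf, h1, h2, memL, mem_Wsharp]
    tauto
  have hfin : FiniteDimensional ℂ (L ⊓ headSub n : Submodule ℂ TT) := by
    refine Module.Finite.iff_fg.2 (Submodule.fg_of_fg_map_of_fg_inf_ker piU ?_ ?_)
    · rw [hGU]
      exact Module.Finite.iff_fg.1 hfinU
    · rw [hGK]
      exact Module.Finite.iff_fg.1 inferInstance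
  refine ⟨n, L ⊓ headSub n, inf_le_right.trans (headSub_le_Vsub n), hfin, ?_,
    (disjoint_headSub_tailSpan n).mono_left inf_le_right, le_antisymm ?_ ?_⟩
  · have e1 := finrank_map_add_finrank_inf_ker piU (L ⊓ headSub n)
    have e2 := finrank_map_add_finrank_inf_ker (piU ∘ₗ φ.symm.toLinearMap) (Wsharp ⊓ headSub n)
    rw [hGU, hGK] at e1
    rw [← map_Wsharp_eq_map_head hn, (headEquiv n).finrank_eq, finrank_fin_fun] at e2
    rw [deg, ← hL]
    omega
  · rintro x ⟨hxL, hxV⟩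
    obtain ⟨y, hy, hxy, hz⟩ := exists_headSub_sub_mem_Wsharp n x
    have hyL : y ∈ L := by simpa using sub_mem hxL ((memL _).2 (hn _ hxy hz))
    rw [← add_sub_cancel y x]
    exact Submodule.add_mem_sup ⟨hyL, hy⟩
      (mem_tailSpan.2 ⟨sub_mem hxV (headSub_le_Vsub n hy), mem_Wsharp.1 hxy, hz⟩)
  · refine sup_le (inf_le_inf_left _ (headSub_le_Vsub n)) fun x hx => ?_
    obtain ⟨hV, h2, h1⟩ := mem_tailSpan.1 hx
    exact ⟨(memL x).2 (hn x (mem_Wsharp.2 h2) h1), hV⟩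

/-- `φ·W = φ(W^♯) ∩ V` is E-commensurable of index `k` with `W` iff `d(φ) = k`. -/
theorem stmt8 (φ : TT ≃ₗ[ℂ] TT) (ψ : RR ≃ₗ[ℂ] RR) (h : IsMackey φ ψ) (k : ℤ) :
    Ecomm ((Wsharp.map φ.toLinearMap) ⊓ Vsub) k ↔ deg φ = k :=
  ⟨fun hk => (ecomm_deg h).index_unique hk, fun hk => hk ▸ ecomm_deg h⟩
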